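/- arXiv:2210.05128 — 4 statements merged into one kernel-verified Lean document; each statement's English description precedes it below -/
import Mathlib

section
/- Let A be a real m×n matrix (m ≥ 1) all of whose rows are nonzero, b ∈ ℝ^m, x ∈ ℝ^n, p ∈ [1,∞), η ∈ (0,1]. Set ε = η · max_{1≤i≤m} |b^{(i)} − A^{(i)}x|^p / ‖A^{(i)}‖_p^p, let τ = { i : |b^{(i)} − A^{(i)}x|^p ≥ ε‖A^{(i)}‖_p^p }, and define ξ = Σ_{i∈τ} (b^{(i)} − A^{(i)}x) e_i. Assume Aᵀξ ≠ 0. Then (ξᵀ(b − Ax))² / ‖Aᵀξ‖₂² ≥ ε^{2/p} · (Σ_{i∈τ} ‖A^{(i)}‖_p²) / ‖A_τ‖², where ‖A_τ‖ is the ℓ²→ℓ² operator norm (largest singular value) of the row submatrix A_τ of A with rows indexed by τ. -/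
open Matrix Finset

/-- The ℓ²→ℓ² operator norm (largest singular value) of a real matrix. -/
noncomputable def sigmaMax {ι : Type} [Fintype ι] {n : ℕ}
    (M : Matrix ι (Fin n) ℝ) : ℝ :=
  ‖LinearMap.toContinuousLinearMap (Matrix.toEuclideanLin M)‖

/-- The row submatrix of `A` consisting of the rows indexed by `τ`. -/
def rowSubmatrix {m n : ℕ} (A : Matrix (Fin m) (Fin n) ℝ) (τ : Finset (Fin m)) :
    Matrix {i : Fin m // i ∈ τ} (Fin n) ℝ := fun i j => A i.1 j

/-!
Put `r = b - Ax`. Then `ξᵀr = Σ_{i∈τ} rᵢ²` and `Aᵀξ = A_τᵀ r_τ`, so `‖Aᵀξ‖² ≤ ‖A_τ‖² Σ_{i∈τ} rᵢ²`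
and the quotient is at least `(Σ_{i∈τ} rᵢ²) / ‖A_τ‖²`. Raising the selection criterion
`ε ‖A⁽ⁱ⁾‖_p^p ≤ |rᵢ|^p` to the power `2 / p` bounds each term `rᵢ²` from below.
-/

theorem rpow_div_mul_rpow_div_le_rpow {p q a b t : ℝ} (hp : 0 < p) (hq : 0 ≤ q) (ha : 0 ≤ a)
    (hb : 0 ≤ b) (ht : 0 ≤ t) (h : a * b ≤ t ^ p) : a ^ (q / p) * b ^ (q / p) ≤ t ^ q :=
  calc a ^ (q / p) * b ^ (q / p) = (a * b) ^ (q / p) := (Real.mul_rpow ha hb).symm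
    _ ≤ (t ^ p) ^ (q / p) := by gcongr
    _ = t ^ q := by rw [← Real.rpow_mul ht, mul_div_cancel₀ q hp.ne']

theorem rpow_two_div_mul_sum_le_sum_sq {ι : Type*} {s : Finset ι} {w r : ι → ℝ} {p ε : ℝ}
    (hp : 0 < p) (hε : 0 ≤ ε) (hw : ∀ i ∈ s, 0 ≤ w i) (h : ∀ i ∈ s, ε * w i ≤ |r i| ^ p) :
    ε ^ (2 / p) * ∑ i ∈ s, w i ^ (2 / p) ≤ ∑ i ∈ s, r i ^ 2 := by
  rw [mul_sum]
  refine sum_le_sum fun i hi => ?_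
  simpa using rpow_div_mul_rpow_div_le_rpow hp zero_le_two hε (hw i hi) (abs_nonneg _) (h i hi)

section Block

variable {m n R : Type*} [Fintype m] [DecidableEq m] [CommSemiring R]

theorem sum_smul_single_dotProduct (τ : Finset m) (r : m → R) :
    (∑ i ∈ τ, r i • (Pi.single i 1 : m → R)) ⬝ᵥ r = ∑ i ∈ τ, r i ^ 2 := by
  simp [sum_dotProduct, sq]

theorem transpose_mulVec_sum_smul_single (A : Matrix m n R) (τ : Finset m) (r : m → R) :
    Aᵀ *ᵥ (∑ i ∈ τ, r i • (Pi.single i 1 : m → R)) =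
      (A.submatrix ((↑) : τ → m) id)ᵀ *ᵥ fun i => r i := by
  have h_block : (A.submatrix ((↑) : τ → m) id)ᵀ *ᵥ (fun i => r i) = ∑ i ∈ τ, r i • A i := by
    rw [mulVec_transpose, vecMul_eq_sum]
    exact sum_coe_sort τ fun i => r i • A i
  rw [h_block, mulVec_sum]
  simp only [mulVec_smul, mulVec_single_one]
  rfl

end Block

section OperatorNorm

open scoped Matrix.Norms.L2Operator

theorem sigmaMax_eq_l2_opNorm {ι : Type} [Fintype ι] {n : ℕ} (M : Matrix ι (Fin n) ℝ) :
    sigmaMax M = ‖M‖ :=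
  rfl

variable {m n : Type*} [Fintype m] [Fintype n] [DecidableEq n]

theorem sum_sq_transpose_mulVec_le (M : Matrix m n ℝ) (v : m → ℝ) :
    ∑ j, (Mᵀ *ᵥ v) j ^ 2 ≤ ‖M‖ ^ 2 * ∑ i, v i ^ 2 := by
  classical
  have h_norm : ‖WithLp.toLp 2 (Mᵀ *ᵥ v)‖ ≤ ‖M‖ * ‖WithLp.toLp 2 v‖ := by
    rw [← l2_opNorm_conjTranspose, conjTranspose_eq_transpose_of_trivial]
    exact l2_opNorm_mulVec Mᵀ (WithLp.toLp 2 v)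
  have h_sq := pow_le_pow_left₀ (norm_nonneg _) h_norm 2
  rwa [mul_pow, EuclideanSpace.real_norm_sq_eq, EuclideanSpace.real_norm_sq_eq] at h_sq

theorem sum_sq_div_sq_l2_opNorm_le {M : Matrix m n ℝ} {v : m → ℝ} (h : Mᵀ *ᵥ v ≠ 0) :
    (∑ i, v i ^ 2) / ‖M‖ ^ 2 ≤ (∑ i, v i ^ 2) ^ 2 / ∑ j, (Mᵀ *ᵥ v) j ^ 2 := by
  have h_pos : 0 < ∑ j, (Mᵀ *ᵥ v) j ^ 2 := by
    obtain ⟨j, hj⟩ := Function.ne_iff.1 h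
    exact sum_pos' (fun _ _ => sq_nonneg _) ⟨j, mem_univ j, sq_pos_of_ne_zero hj⟩
  refine div_le_of_le_mul₀ (by positivity) (by positivity) ?_
  rw [div_mul_eq_mul_div, le_div_iff₀ h_pos]
  calc (∑ i, v i ^ 2) * ∑ j, (Mᵀ *ᵥ v) j ^ 2
      ≤ (∑ i, v i ^ 2) * (‖M‖ ^ 2 * ∑ i, v i ^ 2) := by
        gcongr
        exact sum_sq_transpose_mulVec_le M v
    _ = (∑ i, v i ^ 2) ^ 2 * ‖M‖ ^ 2 := by ring

theorem fgbk_projection_lower_bound_general [DecidableEq m] (A : Matrix m n ℝ) (b : m → ℝ)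
    (x : n → ℝ) {p ε : ℝ} (hp : 0 < p) (hε : 0 ≤ ε) {τ : Finset m}
    (hτ : ∀ i ∈ τ, ε * ∑ j, |A i j| ^ p ≤ |b i - (A *ᵥ x) i| ^ p) {ξ : m → ℝ}
    (hξ : ξ = ∑ i ∈ τ, (b i - (A *ᵥ x) i) • (Pi.single i 1 : m → ℝ)) (hAξ : Aᵀ *ᵥ ξ ≠ 0) :
    ε ^ (2 / p) * (∑ i ∈ τ, (∑ j, |A i j| ^ p) ^ (2 / p)) /
        ‖A.submatrix ((↑) : τ → m) id‖ ^ 2 ≤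
      (ξ ⬝ᵥ (b - A *ᵥ x)) ^ 2 / ∑ j, (Aᵀ *ᵥ ξ) j ^ 2 := by
  set r := b - A *ᵥ x
  have h_dot : ξ ⬝ᵥ r = ∑ i ∈ τ, r i ^ 2 := hξ ▸ sum_smul_single_dotProduct τ r
  have h_block : Aᵀ *ᵥ ξ = (A.submatrix ((↑) : τ → m) id)ᵀ *ᵥ fun i => r i :=
    hξ ▸ transpose_mulVec_sum_smul_single A τ r
  have h_residual : ε ^ (2 / p) * ∑ i ∈ τ, (∑ j, |A i j| ^ p) ^ (2 / p) ≤ ∑ i ∈ τ, r i ^ 2 :=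
    rpow_two_div_mul_sum_le_sum_sq hp hε (fun _ _ => by positivity) hτ
  calc _ ≤ (∑ i ∈ τ, r i ^ 2) / ‖A.submatrix ((↑) : τ → m) id‖ ^ 2 := by gcongr
    _ ≤ (∑ i ∈ τ, r i ^ 2) ^ 2 / ∑ j, (Aᵀ *ᵥ ξ) j ^ 2 := by
      rw [h_block, ← sum_coe_sort τ fun i => r i ^ 2]
      exact sum_sq_div_sq_l2_opNorm_le (h_block ▸ hAξ)
    _ = _ := by rw [h_dot]

end OperatorNorm

/-- Key per-step lower bound (inequality (2.11)) in the convergence analysis of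
the fast greedy block Kaczmarz method:
`(ξᵀ(b − Ax))² / ‖Aᵀξ‖₂² ≥ ε^{2/p} · (Σ_{i∈τ} ‖A⁽ⁱ⁾‖_p²) / ‖A_τ‖²`. -/
theorem fgbk_projection_lower_bound {m n : ℕ} (hm : 0 < m)
    (A : Matrix (Fin m) (Fin n) ℝ) (hA : ∀ i, A i ≠ 0)
    (b : Fin m → ℝ) (x : Fin n → ℝ)
    (p : ℝ) (hp : 1 ≤ p) (η : ℝ) (hη0 : 0 < η) (hη1 : η ≤ 1)
    (ε : ℝ)
    (hε : ε = η * Finset.univ.sup' ⟨⟨0, hm⟩, Finset.mem_univ _⟩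
      (fun i => |b i - A.mulVec x i| ^ p / ∑ j, |A i j| ^ p))
    (τ : Finset (Fin m))
    (hτ : ∀ i, i ∈ τ ↔ |b i - A.mulVec x i| ^ p ≥ ε * ∑ j, |A i j| ^ p)
    (ξ : Fin m → ℝ)
    (hξ : ξ = ∑ i ∈ τ, (b i - A.mulVec x i) • (Pi.single i 1 : Fin m → ℝ))
    (hAξ : A.transpose.mulVec ξ ≠ 0) :
    (ξ ⬝ᵥ (b - A.mulVec x)) ^ 2 / (∑ j, (A.transpose.mulVec ξ j) ^ 2) ≥
      ε ^ (2 / p) * (∑ i ∈ τ, (∑ j, |A i j| ^ p) ^ (2 / p)) /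
        (sigmaMax (rowSubmatrix A τ)) ^ 2 := by
  have hε_nonneg : 0 ≤ ε := hε ▸ mul_nonneg hη0.le
    (le_sup'_of_le _ (mem_univ ⟨0, hm⟩) (by positivity))
  rw [sigmaMax_eq_l2_opNorm]
  exact fgbk_projection_lower_bound_general A b x (by linarith) hε_nonneg
    (fun i hi => (hτ i).1 hi) hξ hAξ
end

section
/- Let A be a real m×n matrix (m ≥ 1) all of whose rows are nonzero, let x* ∈ ℝ^n with A x* = b, and let σ > 0 satisfy ‖A u‖₂ ≥ σ‖u‖₂ for all u in the range of Aᵀ. Let x ∈ ℝ^n satisfy x − x* ∈ range(Aᵀ) and b − Ax ≠ 0. Fix p ∈ [1,∞) and η ∈ (0,1], set ε = η · max_{1≤i≤m} |b^{(i)} − A^{(i)}x|^p / ‖A^{(i)}‖_p^p, τ = { i : |b^{(i)} − A^{(i)}x|^p ≥ ε‖A^{(i)}‖_p^p }, ξ = Σ_{i∈τ} (b^{(i)} − A^{(i)}x) e_i, and x' = x + (ξᵀ(b − Ax)/‖Aᵀξ‖₂²) Aᵀξ. Then ‖x' − x*‖₂² ≤ (1 − β σ²) ‖x − x*‖₂²,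 where β = (η^{2/p} / Σ_{i=1}^m ‖A^{(i)}‖_p²) · (Σ_{i∈τ} ‖A^{(i)}‖_p²) / ‖A_τ‖², and ‖A_τ‖ is the ℓ²→ℓ² operator norm (largest singular value) of the row submatrix A_τ with rows indexed by τ. -/
open Matrix Finset

/-!
The block update is the minimal error step for the subsystem `A_τ z = b_τ`: it adds to `x` the
orthogonal projection of `x* - x` onto the line spanned by `A_τᵀ (b_τ - A_τ x)`. By Pythagoras the
squared error drops by the squared norm of that projection, which is at least
`‖b_τ - A_τ x‖² / ‖A_τ‖²`. With `k` the largest ratio `|rᵢ|ᵖ / ‖A⁽ⁱ⁾‖ₚᵖ` of the residual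
`r = b - A x`, every row satisfies `rᵢ² ≤ k^(2/p) ‖A⁽ⁱ⁾‖ₚ²` while the rows in `τ` satisfy
`rᵢ² ≥ (η k)^(2/p) ‖A⁽ⁱ⁾‖ₚ²`, so `τ` carries at least the fraction
`η^(2/p) ∑_{i ∈ τ} ‖A⁽ⁱ⁾‖ₚ² / ∑ᵢ ‖A⁽ⁱ⁾‖ₚ²` of `‖r‖² = ‖A (x - x*)‖² ≥ σ² ‖x - x*‖²`.
-/

section MinErrorStep

open ContinuousLinearMap

variable {𝕜 E F : Type*} [RCLike 𝕜]
  [NormedAddCommGroup E] [InnerProductSpace 𝕜 E] [CompleteSpace E]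
  [NormedAddCommGroup F] [InnerProductSpace 𝕜 F] [CompleteSpace F]

/-- One step of the minimal error method for `T z = y`: move from `x` along the pulled-back residual
`T† (y - T x)`, with the step length that brings `x` closest to the solutions of `T z = y`. -/
noncomputable def minErrorStep (T : E →L[𝕜] F) (y : F) (x : E) : E :=
  x + ((‖y - T x‖ ^ 2 / ‖adjoint T (y - T x)‖ ^ 2 : ℝ) : 𝕜) • adjoint T (y - T x)

theorem minErrorStep_map (T : E →L[𝕜] F) (z x : E) :
    minErrorStep T (T z) x = x + (𝕜 ∙ adjoint T (T (z - x))).starProjection (z - x) := by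
  rw [minErrorStep, ← map_sub, Submodule.starProjection_singleton, adjoint_inner_left,
    inner_self_eq_norm_sq_to_K, RCLike.ofReal_div, RCLike.ofReal_pow]

theorem norm_map_le_opNorm_mul_norm_starProjection (T : E →L[𝕜] F) (e : E) :
    ‖T e‖ ≤ ‖T‖ * ‖(𝕜 ∙ adjoint T (T e)).starProjection e‖ := by
  set P := (𝕜 ∙ adjoint T (T e)).starProjection
  have orthogonal : inner 𝕜 (adjoint T (T e)) (e - P e) = 0 :=
    Submodule.mem_orthogonal_singleton_iff_inner_right.mp
      (Submodule.sub_starProjection_mem_orthogonal e)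
  have inner_eq : inner 𝕜 (T e) (T e) = inner 𝕜 (T e) (T (P e)) := by
    rwa [adjoint_inner_left, map_sub, inner_sub_right, sub_eq_zero] at orthogonal
  have sq_le : ‖T e‖ * ‖T e‖ ≤ ‖T e‖ * ‖T (P e)‖ := by
    rw [← inner_self_eq_norm_mul_norm (𝕜 := 𝕜), inner_eq]
    exact re_inner_le_norm _ _
  rcases (norm_nonneg (T e)).eq_or_lt with h | h
  · rw [← h]
    positivity
  · exact (le_of_mul_le_mul_left sq_le h).trans (T.le_opNorm _)

theorem norm_residual_sq_le_opNorm_sq_mul_sub (T : E →L[𝕜] F) (z x : E) :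
    ‖T z - T x‖ ^ 2 ≤ ‖T‖ ^ 2 * (‖x - z‖ ^ 2 - ‖minErrorStep T (T z) x - z‖ ^ 2) := by
  set L := 𝕜 ∙ adjoint T (T (z - x))
  have error_eq : ‖minErrorStep T (T z) x - z‖ = ‖Lᗮ.starProjection (z - x)‖ := by
    rw [minErrorStep_map, Submodule.starProjection_orthogonal_val, norm_sub_rev, sub_add_eq_sub_sub]
  have pythagoras := L.norm_sq_eq_add_norm_sq_starProjection (z - x)
  rw [error_eq, norm_sub_rev x, pythagoras, add_sub_cancel_right, ← mul_pow, ← map_sub]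
  gcongr
  exact norm_map_le_opNorm_mul_norm_starProjection T (z - x)

end MinErrorStep

section SumBounds

theorem mul_sum_mul_sum_le_of_le_of_ge {ι R : Type*} [Fintype ι] [CommRing R] [LinearOrder R]
    [IsStrictOrderedRing R] {c f : ι → R} {k δ : R} (τ : Finset ι) (hc : ∀ i, 0 ≤ c i) (hδ : 0 ≤ δ)
    (hle : ∀ i, f i ≤ k * c i) (hge : ∀ i ∈ τ, δ * (k * c i) ≤ f i) :
    δ * (∑ i ∈ τ, c i) * ∑ i, f i ≤ (∑ i, c i) * ∑ i ∈ τ, f i := by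
  have hCτ : 0 ≤ ∑ i ∈ τ, c i := Finset.sum_nonneg fun i _ => hc i
  have hC : 0 ≤ ∑ i, c i := Finset.sum_nonneg fun i _ => hc i
  calc δ * (∑ i ∈ τ, c i) * ∑ i, f i
      ≤ δ * (∑ i ∈ τ, c i) * ∑ i, k * c i := by gcongr with i; exact hle i
    _ = (∑ i, c i) * ∑ i ∈ τ, δ * (k * c i) := by simp only [← Finset.mul_sum]; ring
    _ ≤ (∑ i, c i) * ∑ i ∈ τ, f i := by gcongr with i hi; exact hge i hi

theorem abs_rpow_rpow_two_div {p : ℝ} (hp : p ≠ 0) (a : ℝ) : (|a| ^ p) ^ (2 / p) = a ^ 2 := by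
  rw [← Real.rpow_mul (abs_nonneg a), mul_div_cancel₀ _ hp, Real.rpow_two, sq_abs]

theorem sq_le_rpow_two_div {p a y : ℝ} (hp : 0 < p) (h : |a| ^ p ≤ y) : a ^ 2 ≤ y ^ (2 / p) := by
  rw [← abs_rpow_rpow_two_div hp.ne']
  exact Real.rpow_le_rpow (by positivity) h (by positivity)

theorem rpow_two_div_le_sq {p a y : ℝ} (hp : 0 < p) (hy : 0 ≤ y) (h : y ≤ |a| ^ p) :
    y ^ (2 / p) ≤ a ^ 2 := by
  rw [← abs_rpow_rpow_two_div hp.ne']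
  exact Real.rpow_le_rpow hy h (by positivity)

theorem exists_mul_sup'_div_mul_le {ι K : Type*} [Field K] [LinearOrder K] [IsStrictOrderedRing K]
    {s : Finset ι} (hs : s.Nonempty) {f w : ι → K} {η : K} (hf : ∀ i ∈ s, 0 ≤ f i)
    (hw : ∀ i ∈ s, 0 < w i) (hη : η ≤ 1) :
    ∃ i ∈ s, η * s.sup' hs (fun i => f i / w i) * w i ≤ f i := by
  obtain ⟨i, hi, hmax⟩ := Finset.exists_mem_eq_sup' hs fun i => f i / w i
  refine ⟨i, hi, ?_⟩
  rw [hmax, mul_assoc, div_mul_cancel₀ _ (hw i hi).ne']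
  exact mul_le_of_le_one_left (hf i hi) hη

theorem sum_abs_rpow_pos {κ : Type*} [Fintype κ] {v : κ → ℝ} (hv : v ≠ 0) (p : ℝ) :
    0 < ∑ j, |v j| ^ p := by
  obtain ⟨j, hj⟩ := Function.ne_iff.mp hv
  exact Finset.sum_pos' (fun j _ => by positivity)
    ⟨j, Finset.mem_univ j, Real.rpow_pos_of_pos (abs_pos.mpr hj) p⟩

end SumBounds

section RowBlock

variable {𝕜 ι κ : Type*} [RCLike 𝕜] [Fintype κ] [DecidableEq κ]

/-- The rows of `A` indexed by `τ`, as an operator between Euclidean spaces. -/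
noncomputable abbrev rowBlock (A : Matrix ι κ 𝕜) (τ : Finset ι) :
    EuclideanSpace 𝕜 κ →L[𝕜] EuclideanSpace 𝕜 τ :=
  (toEuclideanLin (A.submatrix ((↑) : τ → ι) id)).toContinuousLinearMap

theorem rowBlock_toLp (A : Matrix ι κ 𝕜) (τ : Finset ι) (v : κ → 𝕜) :
    rowBlock A τ (WithLp.toLp 2 v) = WithLp.toLp 2 fun i : τ => (A *ᵥ v) i :=
  rfl

theorem adjoint_rowBlock_toLp_apply (A : Matrix ι κ 𝕜) (τ : Finset ι) (v : ι → 𝕜) (j : κ) :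
    ContinuousLinearMap.adjoint (rowBlock A τ) (WithLp.toLp 2 fun i : τ => v i) j
      = ∑ i ∈ τ, star (A i j) * v i := by
  classical
  rw [rowBlock, ← LinearMap.adjoint_toContinuousLinearMap,
    ← toEuclideanLin_conjTranspose_eq_adjoint]
  exact Finset.sum_coe_sort τ fun i => star (A i j) * v i

theorem norm_rowBlock_pos {A : Matrix ι κ 𝕜} {τ : Finset ι} {i : ι} (hi : i ∈ τ) (hA : A i ≠ 0) :
    0 < ‖rowBlock A τ‖ := by
  rw [norm_pos_iff]
  intro h
  apply hA
  simp only [EmbeddingLike.map_eq_zero_iff] at h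
  exact congrFun h ⟨i, hi⟩

variable [Fintype ι] [DecidableEq ι]

theorem toLp_blockKaczmarz_eq_minErrorStep (A : Matrix ι κ ℝ) (b : ι → ℝ) (x : κ → ℝ)
    (τ : Finset ι) (ξ : ι → ℝ)
    (hξ : ξ = ∑ i ∈ τ, (b i - (A *ᵥ x) i) • (Pi.single i 1 : ι → ℝ)) :
    WithLp.toLp 2 (x + ((ξ ⬝ᵥ (b - A *ᵥ x)) / ∑ j, (Aᵀ *ᵥ ξ) j ^ 2) • Aᵀ *ᵥ ξ)
      = minErrorStep (rowBlock A τ) (WithLp.toLp 2 fun i : τ => b i) (WithLp.toLp 2 x) := by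
  have residual_eq : (WithLp.toLp 2 fun i : τ => b i) - rowBlock A τ (WithLp.toLp 2 x)
      = WithLp.toLp 2 fun i : τ => (b - A *ᵥ x) i := by
    rw [rowBlock_toLp, ← WithLp.toLp_sub]
    rfl
  have hξ_apply (i : ι) : ξ i = if i ∈ τ then (b - A *ᵥ x) i else 0 := by
    simp [hξ, Finset.sum_apply, Pi.single_apply]
  have direction_eq : ContinuousLinearMap.adjoint (rowBlock A τ)
      (WithLp.toLp 2 fun i : τ => (b - A *ᵥ x) i) = WithLp.toLp 2 (Aᵀ *ᵥ ξ) := by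
    ext j
    rw [adjoint_rowBlock_toLp_apply]
    simp [mulVec, dotProduct, hξ_apply]
  have norm_residual_sq : ‖WithLp.toLp 2 fun i : τ => (b - A *ᵥ x) i‖ ^ 2
      = ξ ⬝ᵥ (b - A *ᵥ x) := by
    rw [EuclideanSpace.real_norm_sq_eq, Finset.sum_coe_sort τ fun i => (b - A *ᵥ x) i ^ 2]
    simp [dotProduct, hξ_apply, sq]
  rw [minErrorStep, residual_eq, direction_eq, norm_residual_sq, EuclideanSpace.real_norm_sq_eq]
  rfl

theorem sum_sq_residual_le_norm_rowBlock_sq_mul_sub (A : Matrix ι κ ℝ) (z x x' : κ → ℝ)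
    (τ : Finset ι) (ξ : ι → ℝ)
    (hξ : ξ = ∑ i ∈ τ, ((A *ᵥ z) i - (A *ᵥ x) i) • (Pi.single i 1 : ι → ℝ))
    (hx' : x' = x + ((ξ ⬝ᵥ (A *ᵥ z - A *ᵥ x)) / ∑ j, (Aᵀ *ᵥ ξ) j ^ 2) • Aᵀ *ᵥ ξ) :
    ∑ i ∈ τ, ((A *ᵥ z) i - (A *ᵥ x) i) ^ 2
      ≤ ‖rowBlock A τ‖ ^ 2 * (∑ j, (x j - z j) ^ 2 - ∑ j, (x' j - z j) ^ 2) := by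
  have h := norm_residual_sq_le_opNorm_sq_mul_sub (rowBlock A τ)
    (WithLp.toLp 2 z) (WithLp.toLp 2 x)
  rw [rowBlock_toLp A τ z, ← toLp_blockKaczmarz_eq_minErrorStep A (A *ᵥ z) x τ ξ hξ, ← hx',
    rowBlock_toLp] at h
  simp only [EuclideanSpace.real_norm_sq_eq, PiLp.sub_apply] at h
  rwa [Finset.sum_coe_sort τ fun i => ((A *ᵥ z) i - (A *ᵥ x) i) ^ 2] at h

theorem sum_sq_error_le_of_weighted_residual {A : Matrix ι κ ℝ} {z x x' : κ → ℝ}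
    {τ : Finset ι} (hτ : ∃ i ∈ τ, A i ≠ 0) {ξ : ι → ℝ}
    (hξ : ξ = ∑ i ∈ τ, ((A *ᵥ z) i - (A *ᵥ x) i) • (Pi.single i 1 : ι → ℝ))
    (hx' : x' = x + ((ξ ⬝ᵥ (A *ᵥ z - A *ᵥ x)) / ∑ j, (Aᵀ *ᵥ ξ) j ^ 2) • Aᵀ *ᵥ ξ)
    {σ k δ : ℝ} {c : ι → ℝ} (hδ : 0 ≤ δ) (hc : ∀ i, 0 < c i)
    (hσ : σ ^ 2 * ∑ j, (x j - z j) ^ 2 ≤ ∑ i, ((A *ᵥ z) i - (A *ᵥ x) i) ^ 2)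
    (hle : ∀ i, ((A *ᵥ z) i - (A *ᵥ x) i) ^ 2 ≤ k * c i)
    (hge : ∀ i ∈ τ, δ * (k * c i) ≤ ((A *ᵥ z) i - (A *ᵥ x) i) ^ 2) :
    ∑ j, (x' j - z j) ^ 2
      ≤ (1 - δ / (∑ i, c i) * ((∑ i ∈ τ, c i) / ‖rowBlock A τ‖ ^ 2) * σ ^ 2)
        * ∑ j, (x j - z j) ^ 2 := by
  obtain ⟨i₀, hi₀, hA⟩ := hτ
  have hM : 0 < ‖rowBlock A τ‖ := norm_rowBlock_pos hi₀ hA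
  have hC : 0 < ∑ i, c i := Finset.sum_pos (fun i _ => hc i) ⟨i₀, Finset.mem_univ i₀⟩
  have hCτ : 0 ≤ ∑ i ∈ τ, c i := Finset.sum_nonneg fun i _ => (hc i).le
  have step := sum_sq_residual_le_norm_rowBlock_sq_mul_sub A z x x' τ ξ hξ hx'
  set M := ‖rowBlock A τ‖
  set err := ∑ j, (x j - z j) ^ 2
  set err' := ∑ j, (x' j - z j) ^ 2
  have gain : δ * (∑ i ∈ τ, c i) * (σ ^ 2 * err) ≤ (∑ i, c i) * (M ^ 2 * (err - err')) :=
    calc δ * (∑ i ∈ τ, c i) * (σ ^ 2 * err)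
        ≤ δ * (∑ i ∈ τ, c i) * ∑ i, ((A *ᵥ z) i - (A *ᵥ x) i) ^ 2 := by gcongr
      _ ≤ (∑ i, c i) * ∑ i ∈ τ, ((A *ᵥ z) i - (A *ᵥ x) i) ^ 2 :=
        mul_sum_mul_sum_le_of_le_of_ge τ (fun i => (hc i).le) hδ hle hge
      _ ≤ (∑ i, c i) * (M ^ 2 * (err - err')) := by gcongr
  have rate_eq : δ / (∑ i, c i) * ((∑ i ∈ τ, c i) / M ^ 2) * σ ^ 2 * err
      = δ * (∑ i ∈ τ, c i) * (σ ^ 2 * err) / ((∑ i, c i) * M ^ 2) := by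
    field_simp
  rw [← mul_assoc (∑ i, c i), ← div_le_iff₀' (by positivity), ← rate_eq] at gain
  linarith

end RowBlock

theorem fgbk_contraction_full_general {ι κ : Type*} [Fintype ι] [DecidableEq ι] [Nonempty ι]
    [Fintype κ] [DecidableEq κ] (A : Matrix ι κ ℝ) (hA : ∀ i, A i ≠ 0)
    (b : ι → ℝ) (xs : κ → ℝ) (hxs : A *ᵥ xs = b) (σ : ℝ) (hσ0 : 0 < σ)
    (hσ : ∀ u : κ → ℝ, (∃ y : ι → ℝ, u = Aᵀ *ᵥ y) →
      σ * √(∑ j, u j ^ 2) ≤ √(∑ i, (A *ᵥ u) i ^ 2))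
    (x : κ → ℝ) (hx : ∃ y : ι → ℝ, x - xs = Aᵀ *ᵥ y)
    (p : ℝ) (hp : 0 < p) (η : ℝ) (hη0 : 0 < η) (hη1 : η ≤ 1) (ε : ℝ)
    (hε : ε = η * Finset.univ.sup' Finset.univ_nonempty
      fun i => |b i - (A *ᵥ x) i| ^ p / ∑ j, |A i j| ^ p)
    (τ : Finset ι) (hτ : ∀ i, i ∈ τ ↔ |b i - (A *ᵥ x) i| ^ p ≥ ε * ∑ j, |A i j| ^ p)
    (ξ : ι → ℝ) (hξ : ξ = ∑ i ∈ τ, (b i - (A *ᵥ x) i) • (Pi.single i 1 : ι → ℝ))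
    (x' : κ → ℝ)
    (hx' : x' = x + ((ξ ⬝ᵥ (b - A *ᵥ x)) / ∑ j, (Aᵀ *ᵥ ξ) j ^ 2) • Aᵀ *ᵥ ξ)
    (β : ℝ)
    (hβ : β = η ^ (2 / p) / (∑ i, (∑ j, |A i j| ^ p) ^ (2 / p)) *
      ((∑ i ∈ τ, (∑ j, |A i j| ^ p) ^ (2 / p)) / ‖rowBlock A τ‖ ^ 2)) :
    ∑ j, (x' j - xs j) ^ 2 ≤ (1 - β * σ ^ 2) * ∑ j, (x j - xs j) ^ 2 := by
  subst hxs hε hβ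
  set w : ι → ℝ := fun i => ∑ j, |A i j| ^ p
  set r : ι → ℝ := fun i => (A *ᵥ xs) i - (A *ᵥ x) i
  set k := Finset.univ.sup' Finset.univ_nonempty fun i => |r i| ^ p / w i
  have hw (i : ι) : 0 < w i := sum_abs_rpow_pos (hA i) p
  have hk (i : ι) : |r i| ^ p / w i ≤ k :=
    Finset.le_sup' (fun i => |r i| ^ p / w i) (Finset.mem_univ i)
  have hk0 : 0 ≤ k := (div_nonneg (by positivity) (hw _).le).trans (hk (Classical.arbitrary ι))
  obtain ⟨i₀, -, hi₀⟩ := exists_mul_sup'_div_mul_le Finset.univ_nonempty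
    (f := fun i => |r i| ^ p) (fun i _ => by positivity) (fun i _ => hw i) hη1
  refine sum_sq_error_le_of_weighted_residual (k := k ^ (2 / p)) ⟨i₀, (hτ i₀).mpr hi₀, hA i₀⟩
    hξ hx' (by positivity) (fun i => Real.rpow_pos_of_pos (hw i) _) ?_
    (fun i => ?_) (fun i hi => ?_)
  · have h := pow_le_pow_left₀ (by positivity) (hσ _ hx) 2
    rw [mul_pow, Real.sq_sqrt (by positivity), Real.sq_sqrt (by positivity), mulVec_sub] at h
    simpa only [Pi.sub_apply, sub_sq_comm] using h
  · rw [← Real.mul_rpow hk0 (hw i).le]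
    exact sq_le_rpow_two_div hp ((div_le_iff₀ (hw i)).mp (hk i))
  · rw [← mul_assoc, ← Real.mul_rpow hη0.le hk0, ← Real.mul_rpow (by positivity) (hw i).le]
    exact rpow_two_div_le_sq hp (mul_nonneg (by positivity) (hw i).le) ((hτ i).mp hi)

theorem sigmaMax_rowSubmatrix {m n : ℕ} (A : Matrix (Fin m) (Fin n) ℝ) (τ : Finset (Fin m)) :
    sigmaMax (rowSubmatrix A τ) = ‖rowBlock A τ‖ :=
  rfl

/-- Per-iteration error contraction of the fast greedy block Kaczmarz method
(unconditional variant of Theorem 2.1, with the full row-norm sum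
`Σ_{i=1}^m ‖A⁽ⁱ⁾‖_p²` in the contraction factor):
`‖x' − x*‖₂² ≤ (1 − β σ²)‖x − x*‖₂²`. -/
theorem fgbk_contraction_full {m n : ℕ} (hm : 0 < m)
    (A : Matrix (Fin m) (Fin n) ℝ) (hA : ∀ i, A i ≠ 0)
    (b : Fin m → ℝ) (xs : Fin n → ℝ) (hxs : A.mulVec xs = b)
    (σ : ℝ) (hσ0 : 0 < σ)
    (hσ : ∀ u : Fin n → ℝ, (∃ y : Fin m → ℝ, u = A.transpose.mulVec y) →
      σ * Real.sqrt (∑ j, (u j) ^ 2) ≤ Real.sqrt (∑ i, (A.mulVec u i) ^ 2))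
    (x : Fin n → ℝ) (hx : ∃ y : Fin m → ℝ, x - xs = A.transpose.mulVec y)
    (hres : b - A.mulVec x ≠ 0)
    (p : ℝ) (hp : 1 ≤ p) (η : ℝ) (hη0 : 0 < η) (hη1 : η ≤ 1)
    (ε : ℝ)
    (hε : ε = η * Finset.univ.sup' ⟨⟨0, hm⟩, Finset.mem_univ _⟩
      (fun i => |b i - A.mulVec x i| ^ p / ∑ j, |A i j| ^ p))
    (τ : Finset (Fin m))
    (hτ : ∀ i, i ∈ τ ↔ |b i - A.mulVec x i| ^ p ≥ ε * ∑ j, |A i j| ^ p)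
    (ξ : Fin m → ℝ)
    (hξ : ξ = ∑ i ∈ τ, (b i - A.mulVec x i) • (Pi.single i 1 : Fin m → ℝ))
    (x' : Fin n → ℝ)
    (hx' : x' = x + ((ξ ⬝ᵥ (b - A.mulVec x)) / ∑ j, (A.transpose.mulVec ξ j) ^ 2) •
      A.transpose.mulVec ξ)
    (β : ℝ)
    (hβ : β = η ^ (2 / p) / (∑ i, (∑ j, |A i j| ^ p) ^ (2 / p)) *
      ((∑ i ∈ τ, (∑ j, |A i j| ^ p) ^ (2 / p)) / (sigmaMax (rowSubmatrix A τ)) ^ 2)) :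
    ∑ j, (x' j - xs j) ^ 2 ≤ (1 - β * σ ^ 2) * ∑ j, (x j - xs j) ^ 2 :=
  have : Nonempty (Fin m) := ⟨⟨0, hm⟩⟩
  fgbk_contraction_full_general A hA b xs hxs σ hσ0 hσ x hx p (zero_lt_one.trans_le hp) η hη0 hη1
    ε hε τ hτ ξ hξ x' hx' β (sigmaMax_rowSubmatrix A τ ▸ hβ)
end

section
/- Let A be a real m×n matrix all of whose rows are nonzero, b ∈ ℝ^m, x ∈ ℝ^n, and let I ⊆ {1,…,m} be a nonempty index set. Define ξ = Σ_{i∈I} (b^{(i)} − A^{(i)}x) e_i and assume Aᵀξ ≠ 0. With the stepsize α = ‖ξ‖₂² ‖A_I‖_F² / ‖Aᵀξ‖₂² and weights ω_i = ‖A^{(i)}‖₂² / ‖A_I‖_F² for i ∈ I, the averaged block Kaczmarz update equals the single-vector form: x + α Σ_{i∈I} ω_i · ((b^{(i)} − A^{(i)}x)/‖A^{(i)}‖₂²) (A^{(i)})ᵀ = x + (ξᵀ(b − Ax)/‖Aᵀξ‖₂²) Aᵀξ. -/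
open Matrix Finset

/-!
In the Kaczmarz sum each weight `ω_i = ‖A⁽ⁱ⁾‖₂² / ‖A_I‖_F²` cancels the normalization by
`‖A⁽ⁱ⁾‖₂²`, so the sum is `‖A_I‖_F⁻² Aᵀξ`. The stepsize cancels `‖A_I‖_F²` and leaves the
coefficient `‖ξ‖₂² / ‖Aᵀξ‖₂²`. Finally `‖ξ‖₂² = ξᵀ(b − Ax)`, because `ξ` agrees with `b − Ax` on
`I` and vanishes off `I`.
-/

section BlockVector

variable {ι κ R : Type*} [Fintype ι] [DecidableEq ι]

theorem sum_smul_single_one_dotProduct [Semiring R] (s : Finset ι) (r v : ι → R) :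
    (∑ i ∈ s, r i • (Pi.single i 1 : ι → R)) ⬝ᵥ v = ∑ i ∈ s, r i * v i := by
  simp only [sum_dotProduct, smul_dotProduct, single_one_dotProduct, smul_eq_mul]

theorem sum_smul_single_one_dotProduct_eq_sum_sq [Semiring R] (s : Finset ι) (r : ι → R) :
    (∑ i ∈ s, r i • (Pi.single i 1 : ι → R)) ⬝ᵥ r =
      ∑ j, (∑ i ∈ s, r i • (Pi.single i 1 : ι → R)) j ^ 2 := by
  set ξ : ι → R := ∑ i ∈ s, r i • Pi.single i 1 with hξ
  have hξ_apply : ∀ i ∈ s, ξ i = r i := fun i hi => by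
    simp [hξ, ← Pi.single_smul, sum_pi_single, hi]
  calc ξ ⬝ᵥ r = ∑ i ∈ s, r i * r i := sum_smul_single_one_dotProduct s r r
    _ = ∑ i ∈ s, r i * ξ i := sum_congr rfl fun i hi => by rw [hξ_apply i hi]
    _ = ξ ⬝ᵥ ξ := (sum_smul_single_one_dotProduct s r ξ).symm
    _ = ∑ j, ξ j ^ 2 := by simp only [dotProduct, sq]

theorem transpose_mulVec_sum_smul_single_one [CommSemiring R] (A : Matrix ι κ R)
    (s : Finset ι) (r : ι → R) :
    Aᵀ *ᵥ ∑ i ∈ s, r i • (Pi.single i 1 : ι → R) = ∑ i ∈ s, r i • A.row i := by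
  simp only [mulVec_sum, mulVec_smul, mulVec_single_one, col_transpose]

end BlockVector

theorem sum_sq_pos_of_ne_zero {ι R : Type*} [Fintype ι] [Ring R] [LinearOrder R]
    [IsStrictOrderedRing R] {v : ι → R} (hv : v ≠ 0) : 0 < ∑ j, v j ^ 2 := by
  obtain ⟨j, hj⟩ := Function.ne_iff.mp hv
  exact sum_pos' (fun _ _ => sq_nonneg _) ⟨j, mem_univ j, sq_pos_of_ne_zero hj⟩

theorem sum_div_smul_div_smul {ι K E : Type*} [Semifield K] [AddCommMonoid E] [Module K E]
    (s : Finset ι) {w : ι → K} (hw : ∀ i ∈ s, w i ≠ 0) (c : K) (r : ι → K) (v : ι → E) :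
    ∑ i ∈ s, (w i / c) • (r i / w i) • v i = c⁻¹ • ∑ i ∈ s, r i • v i := by
  rw [smul_sum]
  refine sum_congr rfl fun i hi => ?_
  rw [smul_smul, smul_smul, div_mul_div_cancel₀' (hw i hi), div_eq_inv_mul]

theorem fgbk_average_update_eq_general {m n K : Type*} [Fintype m] [DecidableEq m] [Fintype n]
    [Field K] [LinearOrder K] [IsStrictOrderedRing K] (A : Matrix m n K) (b : m → K)
    (x : n → K) (I : Finset m) (hA : ∀ i ∈ I, A.row i ≠ 0) (ξ : m → K)
    (hξ : ξ = ∑ i ∈ I, (b i - (A *ᵥ x) i) • (Pi.single i 1 : m → K)) (hAξ : Aᵀ *ᵥ ξ ≠ 0)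
    (α : K) (hα : α = (∑ j, ξ j ^ 2) * (∑ i ∈ I, ∑ j, A i j ^ 2) / ∑ j, (Aᵀ *ᵥ ξ) j ^ 2)
    (ω : m → K) (hω : ∀ i ∈ I, ω i = (∑ j, A i j ^ 2) / ∑ i ∈ I, ∑ j, A i j ^ 2) :
    x + α • ∑ i ∈ I, ω i • (((b i - (A *ᵥ x) i) / ∑ j, A i j ^ 2) • A.row i) =
      x + ((ξ ⬝ᵥ (b - A *ᵥ x)) / ∑ j, (Aᵀ *ᵥ ξ) j ^ 2) • (Aᵀ *ᵥ ξ) := by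
  have hrow : ∀ i ∈ I, 0 < ∑ j, A i j ^ 2 := fun i hi => sum_sq_pos_of_ne_zero (hA i hi)
  have hI : I.Nonempty := nonempty_iff_ne_empty.mpr fun hI => hAξ (by simp [hξ, hI])
  have hblock : ∑ i ∈ I, ∑ j, A i j ^ 2 ≠ 0 := (sum_pos hrow hI).ne'
  have hdir : ∑ i ∈ I, ω i • (((b i - (A *ᵥ x) i) / ∑ j, A i j ^ 2) • A.row i) =
      (∑ i ∈ I, ∑ j, A i j ^ 2)⁻¹ • (Aᵀ *ᵥ ξ) := by
    rw [hξ, transpose_mulVec_sum_smul_single_one,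
      ← sum_div_smul_div_smul I (fun i hi => (hrow i hi).ne')]
    exact sum_congr rfl fun i hi => by rw [hω i hi]
  have hnorm : ξ ⬝ᵥ (b - A *ᵥ x) = ∑ j, ξ j ^ 2 := by
    rw [hξ]
    exact sum_smul_single_one_dotProduct_eq_sum_sq I (b - A *ᵥ x)
  rw [hdir, smul_smul, hnorm, hα]
  congr 2
  field_simp

/-- The averaged block Kaczmarz update with stepsize
`α = ‖ξ‖₂² ‖A_I‖_F² / ‖Aᵀξ‖₂²` and weights `ω_i = ‖A⁽ⁱ⁾‖₂² / ‖A_I‖_F²`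
collapses to the single-vector form
`x + (ξᵀ(b − Ax)/‖Aᵀξ‖₂²) Aᵀξ` of the fast deterministic/greedy block Kaczmarz
method. -/
theorem fgbk_average_update_eq {m n : ℕ} (A : Matrix (Fin m) (Fin n) ℝ)
    (hA : ∀ i, A i ≠ 0) (b : Fin m → ℝ) (x : Fin n → ℝ)
    (I : Finset (Fin m)) (hI : I.Nonempty)
    (ξ : Fin m → ℝ)
    (hξ : ξ = ∑ i ∈ I, (b i - A.mulVec x i) • (Pi.single i 1 : Fin m → ℝ))
    (hAξ : A.transpose.mulVec ξ ≠ 0)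
    (α : ℝ)
    (hα : α = (∑ j, (ξ j) ^ 2) * (∑ i ∈ I, ∑ j, (A i j) ^ 2) /
      ∑ j, (A.transpose.mulVec ξ j) ^ 2)
    (ω : Fin m → ℝ)
    (hω : ∀ i ∈ I, ω i = (∑ j, (A i j) ^ 2) / ∑ i ∈ I, ∑ j, (A i j) ^ 2) :
    x + α • ∑ i ∈ I, ω i • (((b i - A.mulVec x i) / ∑ j, (A i j) ^ 2) • A i) =
      x + ((ξ ⬝ᵥ (b - A.mulVec x)) / ∑ j, (A.transpose.mulVec ξ j) ^ 2) •
        A.transpose.mulVec ξ :=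
  fgbk_average_update_eq_general A b x I (fun i _ => hA i) ξ hξ hAξ α hα ω hω
end

section
/- Let A be a real m×n matrix (m ≥ 1) all of whose rows are nonzero, b ∈ ℝ^m, x ∈ ℝ^n with b − Ax ≠ 0, let x* satisfy Ax* = b and x − x* ∈ range(Aᵀ). Fix p ∈ [1,∞) and η ∈ (0,1], set ε = η · max_{1≤i≤m} |b^{(i)} − A^{(i)}x|^p / ‖A^{(i)}‖_p^p, τ = { i : |b^{(i)} − A^{(i)}x|^p ≥ ε‖A^{(i)}‖_p^p }, and ξ = Σ_{i∈τ} (b^{(i)} − A^{(i)}x) e_i. Then ξᵀ(b − Ax) > 0 and Aᵀξ ≠ 0. -/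
open Matrix Finset

/-! Some entry of the residual `r = b − Ax` is nonzero, so the largest ratio `|r i|ᵖ / ‖A i‖ₚᵖ` is
positive, and a row attaining it has `r i ≠ 0`. This row belongs to `τ` because `ε` is at most the
largest ratio, hence `ξᵀr = ∑ i ∈ τ, (r i)²` is positive. Since `r = A(x* − x)`, this number is also
`(Aᵀξ)ᵀ(x* − x)`, so `Aᵀξ` cannot vanish. -/

theorem exists_pos_and_mul_le_of_le_sup'_div {ι K : Type*} [Semifield K] [LinearOrder K]
    [IsStrictOrderedRing K] {s : Finset ι} (hs : s.Nonempty) {f w : ι → K} {c : K}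
    (hw : ∀ i ∈ s, 0 ≤ w i) (hpos : 0 < s.sup' hs fun i => f i / w i)
    (hc : c ≤ s.sup' hs fun i => f i / w i) :
    ∃ i ∈ s, 0 < f i ∧ c * w i ≤ f i := by
  obtain ⟨i, hi, hmax⟩ := exists_mem_eq_sup' hs fun i => f i / w i
  rw [hmax] at hpos hc
  have hwi : 0 < w i := (hw i hi).lt_of_ne' (div_ne_zero_iff.mp hpos.ne').2
  exact ⟨i, hi, (div_pos_iff_of_pos_right hwi).mp hpos, (le_div_iff₀ hwi).mp hc⟩

theorem sum_norm_rpow_pos {ι : Type*} [Fintype ι] {E : ι → Type*}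
    [∀ i, NormedAddGroup (E i)] {v : ∀ i, E i} (hv : v ≠ 0) (p : ℝ) :
    0 < ∑ i, ‖v i‖ ^ p := by
  obtain ⟨i, hi⟩ := Function.ne_iff.mp hv
  exact sum_pos' (fun j _ => Real.rpow_nonneg (norm_nonneg (v j)) p)
    ⟨i, mem_univ i, Real.rpow_pos_of_pos (norm_pos_iff.mpr hi) p⟩

theorem sum_smul_single_dotProduct_s15 {ι R : Type*} [Fintype ι] [DecidableEq ι] [Semiring R]
    (s : Finset ι) (v w : ι → R) :
    (∑ i ∈ s, v i • (Pi.single i 1 : ι → R)) ⬝ᵥ w = ∑ i ∈ s, v i * w i := by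
  simp [sum_dotProduct]

theorem sum_smul_single_dotProduct_self_pos {ι R : Type*} [Fintype ι] [DecidableEq ι] [Ring R]
    [LinearOrder R] [IsStrictOrderedRing R] {s : Finset ι} {v : ι → R} {i : ι} (hi : i ∈ s)
    (hvi : v i ≠ 0) :
    0 < (∑ j ∈ s, v j • (Pi.single j 1 : ι → R)) ⬝ᵥ v := by
  rw [sum_smul_single_dotProduct_s15]
  exact sum_pos' (fun j _ => mul_self_nonneg (v j)) ⟨i, hi, mul_self_pos.mpr hvi⟩

theorem transpose_mulVec_ne_zero_of_dotProduct_mulVec_ne_zero {ι κ R : Type*} [Fintype ι]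
    [Fintype κ] [NonUnitalCommSemiring R] {A : Matrix ι κ R} {y : ι → R} {z : κ → R}
    (h : y ⬝ᵥ A *ᵥ z ≠ 0) : Aᵀ *ᵥ y ≠ 0 := by
  contrapose! h
  rw [dotProduct_mulVec, ← mulVec_transpose, h, zero_dotProduct]

theorem fgbk_update_well_defined_general {ι κ : Type*} [Fintype ι] [DecidableEq ι] [Nonempty ι]
    [Fintype κ] {A : Matrix ι κ ℝ} (hA : ∀ i, A i ≠ 0) {b : ι → ℝ} {x xs : κ → ℝ}
    (hres : b - A *ᵥ x ≠ 0) (hxs : A *ᵥ xs = b) {p : ℝ} (hp : 0 < p) {η : ℝ} (hη : η ≤ 1) {ε : ℝ}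
    (hε : ε = η * univ.sup' univ_nonempty fun i => |b i - (A *ᵥ x) i| ^ p / ∑ j, |A i j| ^ p)
    {τ : Finset ι} (hτ : ∀ i, i ∈ τ ↔ |b i - (A *ᵥ x) i| ^ p ≥ ε * ∑ j, |A i j| ^ p) {ξ : ι → ℝ}
    (hξ : ξ = ∑ i ∈ τ, (b i - (A *ᵥ x) i) • (Pi.single i 1 : ι → ℝ)) :
    0 < ξ ⬝ᵥ (b - A *ᵥ x) ∧ Aᵀ *ᵥ ξ ≠ 0 := by
  have hrow (i : ι) : 0 < ∑ j, |A i j| ^ p := sum_norm_rpow_pos (hA i) p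
  have hmax : 0 < univ.sup' univ_nonempty
      fun i => |b i - (A *ᵥ x) i| ^ p / ∑ j, |A i j| ^ p := by
    obtain ⟨k, hk⟩ := Function.ne_iff.mp hres
    exact (lt_sup'_iff _).mpr
      ⟨k, mem_univ k, div_pos (Real.rpow_pos_of_pos (abs_pos.mpr hk) p) (hrow k)⟩
  obtain ⟨i, -, hri, hi⟩ := exists_pos_and_mul_le_of_le_sup'_div univ_nonempty
    (fun i _ => (hrow i).le) hmax (hε.trans_le (mul_le_of_le_one_left hmax.le hη))
  have hri_ne : (b - A *ᵥ x) i ≠ 0 :=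
    abs_ne_zero.mp ((Real.rpow_ne_zero (abs_nonneg _) hp.ne').mp hri.ne')
  have hdot : 0 < ξ ⬝ᵥ (b - A *ᵥ x) :=
    hξ ▸ sum_smul_single_dotProduct_self_pos ((hτ i).mpr hi) hri_ne
  have hres_eq : b - A *ᵥ x = A *ᵥ (xs - x) := by rw [mulVec_sub, hxs]
  exact ⟨hdot, transpose_mulVec_ne_zero_of_dotProduct_mulVec_ne_zero (hres_eq ▸ hdot.ne')⟩

/-- Well-definedness of the fast greedy block Kaczmarz update: if the current
residual `b − Ax` is nonzero, then the greedy direction `ξ` satisfies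
`ξᵀ(b − Ax) > 0` and `Aᵀξ ≠ 0`, so the update never divides by zero. -/
theorem fgbk_update_well_defined {m n : ℕ} (hm : 0 < m)
    (A : Matrix (Fin m) (Fin n) ℝ) (hA : ∀ i, A i ≠ 0)
    (b : Fin m → ℝ) (x : Fin n → ℝ) (hres : b - A.mulVec x ≠ 0)
    (xs : Fin n → ℝ) (hxs : A.mulVec xs = b)
    (hx : ∃ y : Fin m → ℝ, x - xs = A.transpose.mulVec y)
    (p : ℝ) (hp : 1 ≤ p) (η : ℝ) (hη0 : 0 < η) (hη1 : η ≤ 1)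
    (ε : ℝ)
    (hε : ε = η * Finset.univ.sup' ⟨⟨0, hm⟩, Finset.mem_univ _⟩
      (fun i => |b i - A.mulVec x i| ^ p / ∑ j, |A i j| ^ p))
    (τ : Finset (Fin m))
    (hτ : ∀ i, i ∈ τ ↔ |b i - A.mulVec x i| ^ p ≥ ε * ∑ j, |A i j| ^ p)
    (ξ : Fin m → ℝ)
    (hξ : ξ = ∑ i ∈ τ, (b i - A.mulVec x i) • (Pi.single i 1 : Fin m → ℝ)) :
    0 < ξ ⬝ᵥ (b - A.mulVec x) ∧ A.transpose.mulVec ξ ≠ 0 := by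
  have : Nonempty (Fin m) := ⟨⟨0, hm⟩⟩
  exact fgbk_update_well_defined_general hA hres hxs (one_pos.trans_le hp) hη1 hε hτ hξ
end
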